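/- Let ε ≤ 1/60000 and δ := (3/2) ε log₂(1/ε). Let n be a positive integer, let H ⊆ ℝ^n be a linear subspace of dimension at least (1−δ) n, let K ⊆ H be a symmetric convex set with γ_H(K) ≥ e^{−δn}, and let x_0 ∈ (−1,1)^n. Then there exists a point x ∈ (x_0 + K) ∩ [−1,1]^n such that the number of indices i with x_i ∈ {−1, +1} is at least ε n / 2. -/

import Mathlib

open MeasureTheory ProbabilityTheory

/-!
Choose a standard Gaussian vector `g` and let `x` maximise `⟪x, g⟫` over `(x₀ + K) ∩ [-1, 1] ^ n`.
On the cube `⟪x - x₀, g⟫ ≤ ∑ i, (|g i| - g i * x₀ i)`, and by Markov's inequality the right-hand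
side is less than `0.85 n` with probability bounded below, since `E |g i| < 0.8`. If only a small
set `I` of coordinates of `x` is tight, then `x` can move freely towards `x₀ + y` for every `y ∈ K`
that vanishes on `I`, so that `⟪y, g⟫ ≤ ⟪x - x₀, g⟫` by maximality. Thus `g` lies in a scaled polar
of `K ∩ E`, where `E` is the subspace of `H` of vectors vanishing on `I`, and it remains to see that
this is so unlikely that a union bound over all small `I` applies.

Both ingredients come from the Prékopa–Leindler inequality at the midpoint. By symmetry and
convexity of `K` it yields `γ_H(K) ≤ γ_E(K)`. Moreover the Gaussian measure gains a factor
`exp (-‖x - y‖² / 4)`, which is small for most `x ∈ K ∩ E` and all `y` in the polar, because two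
typical vectors of `E` have squared norms close to `n` while their inner product is at most
`0.86 n`. So `K ∩ E` and its polar cannot both have large Gaussian measure.

For `n < 2500` one tight coordinate suffices. It exists unless `K` is contained in the cube, whose
Gaussian measure is at most `0.8 ^ n`.
-/

section PrekopaLeindler

open scoped ENNReal Pointwise Topology

theorem volume_add_volume_le_volume_add_of_isCompact {A B : Set ℝ} (hA : IsCompact A)
    (hB : IsCompact B) (hA' : A.Nonempty) (hB' : B.Nonempty) :
    volume A + volume B ≤ volume (A + B) := by
  obtain ⟨a, haA, ha⟩ := hA.exists_isGreatest hA'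
  obtain ⟨b, hbB, hb⟩ := hB.exists_isLeast hB'
  -- `A + b` and `a + B` lie in `A + B` and meet only in the point `a + b`.
  have hdisj : Disjoint ((· + b) '' A) ((a + ·) '' B \ {a + b}) := by
    rw [Set.disjoint_left]
    rintro _ ⟨y, hy, rfl⟩ ⟨⟨z, hz, hzy⟩, hne⟩
    simp only [Set.mem_singleton_iff] at hne hzy
    exact hne (by linarith [ha hy, hb hz])
  have hmeas : MeasurableSet ((a + ·) '' B \ {a + b}) :=
    (hB.image (by fun_prop)).measurableSet.diff (measurableSet_singleton _)
  calc volume A + volume B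
      = volume ((· + b) '' A) + volume ((a + ·) '' B \ {a + b}) := by
        rw [measure_sdiff_null (by simp)]; simp
    _ = volume ((· + b) '' A ∪ (a + ·) '' B \ {a + b}) := (measure_union hdisj hmeas).symm
    _ ≤ volume (A + B) := by
        refine measure_mono (Set.union_subset ?_ (Set.sdiff_subset.trans ?_))
        · rintro _ ⟨y, hy, rfl⟩
          exact Set.add_mem_add hy hbB
        · rintro _ ⟨y, hy, rfl⟩
          exact Set.add_mem_add haA hy

theorem volume_add_volume_le_of_forall_midpoint_mem {A B S : Set ℝ} (hA : MeasurableSet A)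
    (hB : MeasurableSet B) (hA' : A.Nonempty) (hB' : B.Nonempty)
    (hS : ∀ a ∈ A, ∀ b ∈ B, midpoint ℝ a b ∈ S) : volume A + volume B ≤ 2 * volume S := by
  obtain ⟨a, ha⟩ := hA'
  obtain ⟨b, hb⟩ := hB'
  have hcompact : ∀ K ⊆ A, IsCompact K → ∀ L ⊆ B, IsCompact L →
      volume K + volume L ≤ 2 * volume S := fun K hKA hK L hLB hL ↦ by
    calc volume K + volume L ≤ volume (insert a K) + volume (insert b L) := by
          gcongr <;> exact Set.subset_insert _ _
      _ ≤ volume (insert a K + insert b L) := volume_add_volume_le_volume_add_of_isCompact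
          (hK.insert a) (hL.insert b) (Set.insert_nonempty _ _) (Set.insert_nonempty _ _)
      _ ≤ volume ((2 : ℝ) • S) := by
          refine measure_mono ?_
          rintro _ ⟨x, hx, y, hy, rfl⟩
          exact ⟨midpoint ℝ x y, hS _ (Set.insert_subset ha hKA hx) _
            (Set.insert_subset hb hLB hy), by simp [midpoint_eq_smul_add]⟩
      _ = 2 * volume S := by rw [Measure.addHaar_smul]; simp
  rw [hA.measure_eq_iSup_isCompact, hB.measure_eq_iSup_isCompact]
  refine ENNReal.biSup_add_biSup_le' (p := (· ⊆ A)) (q := (· ⊆ B)) ⟨∅, Set.empty_subset _⟩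
    ⟨∅, Set.empty_subset _⟩ fun K hKA L hLB ↦ ?_
  by_cases hK : IsCompact K <;> by_cases hL : IsCompact L <;>
    simp only [hK, hL, iSup_pos, iSup_neg, not_false_eq_true]
  · exact hcompact K hKA hK L hLB hL
  · simpa using hcompact K hKA hK ∅ (Set.empty_subset _) isCompact_empty
  · simpa using hcompact ∅ (Set.empty_subset _) isCompact_empty L hLB hL
  · simp

theorem lintegral_eq_lintegral_measure_ofReal_lt {α : Type*} [MeasurableSpace α] (μ : Measure α)
    {f : α → ℝ≥0∞} (hf : Measurable f) (hf' : ∀ a, f a ≠ ∞) :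
    ∫⁻ a, f a ∂μ = ∫⁻ t in Set.Ioi (0 : ℝ), μ {a | ENNReal.ofReal t < f a} := by
  calc ∫⁻ a, f a ∂μ = ∫⁻ a, ENNReal.ofReal (f a).toReal ∂μ := by
        simp only [ENNReal.ofReal_toReal (hf' _)]
    _ = ∫⁻ t in Set.Ioi (0 : ℝ), μ {a | t < (f a).toReal} :=
        lintegral_eq_lintegral_meas_lt μ (ae_of_all _ fun _ ↦ ENNReal.toReal_nonneg)
          hf.ennreal_toReal.aemeasurable
    _ = ∫⁻ t in Set.Ioi (0 : ℝ), μ {a | ENNReal.ofReal t < f a} :=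
        setLIntegral_congr_fun measurableSet_Ioi fun t ht ↦ by
          simp only [ENNReal.ofReal_lt_iff_lt_toReal (le_of_lt ht) (hf' _)]

theorem lintegral_eq_iSup_lintegral_min_natCast {α : Type*} [MeasurableSpace α] (μ : Measure α)
    {f : α → ℝ≥0∞} (hf : Measurable f) :
    ∫⁻ x, f x ∂μ = ⨆ k : ℕ, ∫⁻ x, min (f x) k ∂μ := by
  rw [← lintegral_iSup fun k ↦ hf.min measurable_const]
  · simp only [← inf_iSup_eq, ENNReal.iSup_natCast, inf_top_eq]
  · exact fun k l hkl x ↦ min_le_min_left _ (Nat.cast_le.2 hkl)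

theorem ennreal_four_mul_le_add_sq (x y : ℝ≥0∞) : 4 * (x * y) ≤ (x + y) ^ 2 := by
  wlog hxy : x ≤ y generalizing x y
  · simpa only [mul_comm, add_comm] using this y x (le_of_not_ge hxy)
  obtain ⟨d, rfl⟩ := exists_add_of_le hxy
  calc 4 * (x * (x + d)) ≤ 4 * (x * (x + d)) + d ^ 2 := le_self_add
    _ = (x + (x + d)) ^ 2 := by ring

theorem lintegral_add_lintegral_le_of_iSup_eq_one {f g h : ℝ → ℝ≥0∞} (hf : Measurable f)
    (hg : Measurable g) (hh : Measurable h) (hf1 : ⨆ x, f x = 1) (hg1 : ⨆ x, g x = 1)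
    (hfgh : ∀ x y, f x * g y ≤ h (midpoint ℝ x y) ^ 2) :
    (∫⁻ x, f x) + ∫⁻ x, g x ≤ 2 * ∫⁻ x, h x := by
  have hf_le (x) : f x ≤ 1 := hf1 ▸ le_iSup f x
  have hg_le (x) : g x ≤ 1 := hg1 ▸ le_iSup g x
  have hsup (u : ℝ → ℝ≥0∞) :
      Measurable fun t : ℝ ↦ volume {a | ENNReal.ofReal t < u a} :=
    Antitone.measurable fun s t hst ↦ measure_mono fun a (ha : _ < u a) ↦
      (ENNReal.ofReal_le_ofReal hst).trans_lt ha
  calc (∫⁻ x, f x) + ∫⁻ x, g x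
      = ∫⁻ t in Set.Ioi (0 : ℝ), (volume {a | ENNReal.ofReal t < f a} +
          volume {a | ENNReal.ofReal t < g a}) := by
        rw [lintegral_add_left (hsup f), lintegral_eq_lintegral_measure_ofReal_lt _ hf
            fun x ↦ ((hf_le x).trans_lt ENNReal.one_lt_top).ne,
          lintegral_eq_lintegral_measure_ofReal_lt _ hg
            fun x ↦ ((hg_le x).trans_lt ENNReal.one_lt_top).ne]
    _ ≤ ∫⁻ t in Set.Ioi (0 : ℝ), 2 * volume {a | ENNReal.ofReal t < min (h a) 1} := by
        refine setLIntegral_mono ((hsup _).const_mul _) fun t _ ↦ ?_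
        rcases lt_or_ge (ENNReal.ofReal t) 1 with ht | ht
        · have hfne : {a | ENNReal.ofReal t < f a}.Nonempty := lt_iSup_iff.1 (ht.trans_eq hf1.symm)
          have hgne : {a | ENNReal.ofReal t < g a}.Nonempty := lt_iSup_iff.1 (ht.trans_eq hg1.symm)
          refine volume_add_volume_le_of_forall_midpoint_mem (measurableSet_lt measurable_const hf)
            (measurableSet_lt measurable_const hg) hfne hgne
            fun a (ha : _ < f a) b (hb : _ < g b) ↦ lt_min ?_ ht
          refine lt_of_pow_lt_pow_left' 2 (lt_of_lt_of_le ?_ (hfgh a b))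
          simpa only [sq] using ENNReal.mul_lt_mul ha hb
        · simp [((hf_le _).trans ht).not_gt, ((hg_le _).trans ht).not_gt]
    _ = 2 * ∫⁻ x, min (h x) 1 := by
        rw [lintegral_const_mul _ (hsup _), lintegral_eq_lintegral_measure_ofReal_lt _
          (hh.min measurable_const) fun x ↦ ((min_le_right _ _).trans_lt ENNReal.one_lt_top).ne]
    _ ≤ 2 * ∫⁻ x, h x := by gcongr; exact min_le_left _ _

theorem lintegral_mul_lintegral_le_of_iSup_ne_top {f g h : ℝ → ℝ≥0∞} (hf : Measurable f)
    (hg : Measurable g) (hh : Measurable h) (hf' : ⨆ x, f x ≠ ∞) (hg' : ⨆ x, g x ≠ ∞)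
    (hfgh : ∀ x y, f x * g y ≤ h (midpoint ℝ x y) ^ 2) :
    (∫⁻ x, f x) * ∫⁻ x, g x ≤ (∫⁻ x, h x) ^ 2 := by
  set a := ⨆ x, f x
  set b := ⨆ x, g x
  rcases eq_or_ne a 0 with ha0 | ha0
  · simp [ENNReal.iSup_eq_zero.1 ha0]
  rcases eq_or_ne b 0 with hb0 | hb0
  · simp [ENNReal.iSup_eq_zero.1 hb0]
  have hab0 : a * b ≠ 0 := mul_ne_zero ha0 hb0
  have hab : a * b ≠ ∞ := ENNReal.mul_ne_top hf' hg'
  set c := (a * b) ^ (1 / 2 : ℝ)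
  have hc : c ^ 2 = a * b := by
    rw [← ENNReal.rpow_natCast, ← ENNReal.rpow_mul]; norm_num
  have hadd : (∫⁻ x, f x) / a + (∫⁻ x, g x) / b ≤ 2 * ((∫⁻ x, h x) / c) := by
    simp only [div_eq_mul_inv, ← lintegral_mul_const _ hf, ← lintegral_mul_const _ hg,
      ← lintegral_mul_const _ hh]
    refine lintegral_add_lintegral_le_of_iSup_eq_one (hf.mul_const _) (hg.mul_const _)
      (hh.mul_const _) ?_ ?_ fun x y ↦ ?_
    · rw [← ENNReal.iSup_mul, ENNReal.mul_inv_cancel ha0 hf']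
    · rw [← ENNReal.iSup_mul, ENNReal.mul_inv_cancel hb0 hg']
    · rw [mul_pow, ← ENNReal.inv_pow, hc, ENNReal.mul_inv (.inl ha0) (.inl hf'), mul_mul_mul_comm]
      gcongr
      exact hfgh x y
  have hmul : 4 * ((∫⁻ x, f x) * (∫⁻ x, g x) / (a * b)) ≤ 4 * ((∫⁻ x, h x) ^ 2 / (a * b)) := by
    calc 4 * ((∫⁻ x, f x) * (∫⁻ x, g x) / (a * b))
        = 4 * ((∫⁻ x, f x) / a * ((∫⁻ x, g x) / b)) := by
          rw [ENNReal.mul_div_mul_comm (.inl ha0) (.inl hf')]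
      _ ≤ ((∫⁻ x, f x) / a + (∫⁻ x, g x) / b) ^ 2 := ennreal_four_mul_le_add_sq _ _
      _ ≤ (2 * ((∫⁻ x, h x) / c)) ^ 2 := by gcongr
      _ = 4 * ((∫⁻ x, h x) ^ 2 / (a * b)) := by
          rw [mul_pow, div_eq_mul_inv, mul_pow, ← ENNReal.inv_pow, hc, div_eq_mul_inv]; norm_num
  have := (ENNReal.mul_le_mul_iff_right (by norm_num) (by norm_num)).1 hmul
  rwa [ENNReal.div_le_iff hab0 hab, ENNReal.div_mul_cancel hab0 hab] at this

theorem lintegral_mul_lintegral_le_sq {f g h : ℝ → ℝ≥0∞} (hf : Measurable f)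
    (hg : Measurable g) (hh : Measurable h)
    (hfgh : ∀ x y, f x * g y ≤ h (midpoint ℝ x y) ^ 2) :
    (∫⁻ x, f x) * ∫⁻ x, g x ≤ (∫⁻ x, h x) ^ 2 := by
  have hbdd (u : ℝ → ℝ≥0∞) (k : ℕ) : ⨆ x, min (u x) k ≠ ∞ :=
    ne_top_of_le_ne_top (ENNReal.natCast_ne_top k) (iSup_le fun _ ↦ min_le_right _ _)
  rw [lintegral_eq_iSup_lintegral_min_natCast _ hf, lintegral_eq_iSup_lintegral_min_natCast _ hg,
    ENNReal.iSup_mul]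
  refine iSup_le fun k ↦ ?_
  rw [ENNReal.mul_iSup]
  exact iSup_le fun l ↦ lintegral_mul_lintegral_le_of_iSup_ne_top (hf.min measurable_const)
    (hg.min measurable_const) hh (hbdd f k) (hbdd g l) fun x y ↦
      (mul_le_mul' (min_le_left _ _) (min_le_left _ _)).trans (hfgh x y)

/-- The midpoint Prékopa–Leindler inequality for the measure `μ`, with a gain measured by the cost
`c`: the larger `c`, the weaker the condition relating `f`, `g` and `h`. For Lebesgue measure this
holds with `c = 0`, and for the standard Gaussian measure, thanks to the strong log-concavity of
its density, with `c x y = ‖x - y‖ ^ 2 / 4`. -/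
def MidpointPrekopaLeindler {E : Type*} [AddCommGroup E] [Module ℝ E] [MeasurableSpace E]
    (μ : Measure E) (c : E → E → ℝ) : Prop :=
  ∀ ⦃f g h : E → ℝ≥0∞⦄, Measurable f → Measurable g → Measurable h →
    (∀ x y, f x * g y ≤ h (midpoint ℝ x y) ^ 2 * ENNReal.ofReal (Real.exp (c x y))) →
    (∫⁻ x, f x ∂μ) * ∫⁻ x, g x ∂μ ≤ (∫⁻ x, h x ∂μ) ^ 2

theorem midpointPrekopaLeindler_volume : MidpointPrekopaLeindler (volume : Measure ℝ) 0 :=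
  fun _ _ _ hf hg hh hfgh ↦ lintegral_mul_lintegral_le_sq hf hg hh (by simpa using hfgh)

namespace MidpointPrekopaLeindler

variable {E F : Type*} [AddCommGroup E] [Module ℝ E] [MeasurableSpace E]
  [AddCommGroup F] [Module ℝ F] [MeasurableSpace F]
  {μ : Measure E} {ν : Measure F} {c : E → E → ℝ} {d : F → F → ℝ}

theorem withDensity (hμ : MidpointPrekopaLeindler μ c) {ρ : E → ℝ≥0∞} (hρ : Measurable ρ)
    {c' : E → E → ℝ}
    (hρc : ∀ x y, ρ x * ρ y * ENNReal.ofReal (Real.exp (c' x y)) ≤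
      ρ (midpoint ℝ x y) ^ 2 * ENNReal.ofReal (Real.exp (c x y))) :
    MidpointPrekopaLeindler (μ.withDensity ρ) c' := by
  intro f g h hf hg hh hfgh
  simp only [lintegral_withDensity_eq_lintegral_mul _ hρ, hf, hg, hh]
  refine hμ (hρ.mul hf) (hρ.mul hg) (hρ.mul hh) fun x y ↦ ?_
  calc ρ x * f x * (ρ y * g y) = ρ x * ρ y * (f x * g y) := by ring
    _ ≤ ρ x * ρ y * (h (midpoint ℝ x y) ^ 2 * ENNReal.ofReal (Real.exp (c' x y))) := by
        exact mul_le_mul_right (hfgh x y) _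
    _ = ρ x * ρ y * ENNReal.ofReal (Real.exp (c' x y)) * h (midpoint ℝ x y) ^ 2 := by ring
    _ ≤ ρ (midpoint ℝ x y) ^ 2 * ENNReal.ofReal (Real.exp (c x y)) * h (midpoint ℝ x y) ^ 2 := by
        exact mul_le_mul_left (hρc x y) _
    _ = (ρ (midpoint ℝ x y) * h (midpoint ℝ x y)) ^ 2 * ENNReal.ofReal (Real.exp (c x y)) := by
        ring

theorem map (hμ : MidpointPrekopaLeindler μ c) (L : E →ₗ[ℝ] F) (hL : Measurable L)
    (hd : ∀ x y, d (L x) (L y) ≤ c x y) : MidpointPrekopaLeindler (μ.map L) d := by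
  intro f g h hf hg hh hfgh
  rw [lintegral_map hf hL, lintegral_map hg hL, lintegral_map hh hL]
  refine hμ (hf.comp hL) (hg.comp hL) (hh.comp hL) fun x y ↦ ?_
  calc f (L x) * g (L y)
      ≤ h (midpoint ℝ (L x) (L y)) ^ 2 * ENNReal.ofReal (Real.exp (d (L x) (L y))) := hfgh _ _
    _ ≤ h (midpoint ℝ (L x) (L y)) ^ 2 * ENNReal.ofReal (Real.exp (c x y)) := by
        gcongr
        exact hd x y
    _ = h (L (midpoint ℝ x y)) ^ 2 * ENNReal.ofReal (Real.exp (c x y)) := by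
        simp only [midpoint_eq_smul_add, map_smul, map_add]

theorem prod [SFinite ν] (hμ : MidpointPrekopaLeindler μ c) (hν : MidpointPrekopaLeindler ν d) :
    MidpointPrekopaLeindler (μ.prod ν) fun p q ↦ c p.1 q.1 + d p.2 q.2 := by
  intro f g h hf hg hh hfgh
  simp only [lintegral_prod _ hf.aemeasurable, lintegral_prod _ hg.aemeasurable,
    lintegral_prod _ hh.aemeasurable]
  refine hμ hf.lintegral_prod_right' hg.lintegral_prod_right' hh.lintegral_prod_right'
    fun a b ↦ ?_
  set s := ENNReal.ofReal (Real.exp (c a b / 2)) with hs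
  have hs_sq : ENNReal.ofReal (Real.exp (c a b)) = s ^ 2 := by
    rw [hs, ← ENNReal.ofReal_pow (Real.exp_pos _).le, ← Real.exp_nat_mul]
    congr 2
    push_cast
    ring
  have hh_mid : Measurable fun y ↦ h (midpoint ℝ a b, y) := hh.comp measurable_prodMk_left
  rw [hs_sq, ← mul_pow, ← lintegral_mul_const _ hh_mid]
  refine hν (hf.comp measurable_prodMk_left) (hg.comp measurable_prodMk_left)
    (hh_mid.mul_const s) fun x y ↦ (hfgh (a, x) (b, y)).trans_eq ?_
  rw [mul_pow, ← hs_sq, mul_assoc, ← ENNReal.ofReal_mul (Real.exp_pos _).le, ← Real.exp_add]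
  simp only [midpoint_eq_smul_add, Prod.mk_add_mk, Prod.smul_mk]

theorem pi {n : ℕ} {μ : Fin n → Measure E} [∀ i, SigmaFinite (μ i)] {c : Fin n → E → E → ℝ}
    (hμ : ∀ i, MidpointPrekopaLeindler (μ i) (c i)) :
    MidpointPrekopaLeindler (Measure.pi μ) fun x y ↦ ∑ i, c i (x i) (y i) := by
  induction n with
  | zero =>
    intro f g h _ _ _ hfgh
    have hdefault (x : Fin 0 → E) : x = default := Subsingleton.elim _ _
    simpa [lintegral_unique, hdefault (midpoint ℝ _ _), Measure.real] using hfgh default default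
  | succ n ih =>
    have hcons : ⇑(Fin.consLinearEquiv ℝ fun _ : Fin (n + 1) ↦ E) =
        (MeasurableEquiv.piFinSuccAbove (fun _ : Fin (n + 1) ↦ E) 0).symm := by
      ext p
      simp [Fin.consLinearEquiv]
    rw [← (measurePreserving_piFinSuccAbove μ 0).symm.map_eq, ← hcons]
    refine ((hμ 0).prod (ih fun i ↦ hμ i.succ)).map
      (Fin.consLinearEquiv ℝ fun _ : Fin (n + 1) ↦ E).toLinearMap ?_ fun x y ↦ ?_
    · exact hcons ▸ MeasurableEquiv.measurable _
    · simp [Fin.sum_univ_succ, Fin.consLinearEquiv]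

theorem measure_mul_measure_le (hμ : MidpointPrekopaLeindler μ c) {A B S : Set E}
    (hA : MeasurableSet A) (hB : MeasurableSet B) (hS : MeasurableSet S) {a : ℝ}
    (hmid : ∀ x ∈ A, ∀ y ∈ B, midpoint ℝ x y ∈ S) (hc : ∀ x ∈ A, ∀ y ∈ B, a ≤ c x y) :
    μ A * μ B ≤ ENNReal.ofReal (Real.exp (-a)) * μ S ^ 2 := by
  set s := ENNReal.ofReal (Real.exp (-a / 2)) with hs
  have hs_sq : s ^ 2 = ENNReal.ofReal (Real.exp (-a)) := by
    rw [hs, ← ENNReal.ofReal_pow (Real.exp_pos _).le, ← Real.exp_nat_mul]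
    congr 2
    push_cast
    ring
  have hind := hμ (f := A.indicator 1) (g := B.indicator 1) (h := S.indicator fun _ ↦ s)
    (measurable_one.indicator hA) (measurable_one.indicator hB) (measurable_const.indicator hS)
    fun x y ↦ by
      by_cases hx : x ∈ A <;> by_cases hy : y ∈ B <;> simp only [hx, hy, Set.indicator_of_mem,
        Set.indicator_of_notMem, not_false_eq_true, mul_zero, zero_mul, zero_le]
      rw [Set.indicator_of_mem (hmid x hx y hy), hs_sq, ← ENNReal.ofReal_mul (Real.exp_pos _).le,
        ← Real.exp_add]
      simpa using hc x hx y hy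
  rwa [lintegral_indicator_one hA, lintegral_indicator_one hB, lintegral_indicator_const hS,
    mul_pow, hs_sq] at hind

end MidpointPrekopaLeindler

theorem midpointPrekopaLeindler_gaussianReal :
    MidpointPrekopaLeindler (gaussianReal 0 1) fun x y ↦ (x - y) ^ 2 / 4 := by
  rw [gaussianReal_of_var_ne_zero 0 one_ne_zero]
  refine midpointPrekopaLeindler_volume.withDensity (measurable_gaussianPDF 0 1) fun x y ↦ ?_
  have hexp : gaussianPDFReal 0 1 x * gaussianPDFReal 0 1 y * Real.exp ((x - y) ^ 2 / 4) =
      gaussianPDFReal 0 1 (midpoint ℝ x y) ^ 2 := by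
    simp only [gaussianPDFReal_def, midpoint_eq_smul_add, mul_pow, ← Real.exp_nat_mul]
    rw [mul_mul_mul_comm, mul_assoc, ← Real.exp_add, ← Real.exp_add, ← sq]
    congr 2
    simp only [sub_zero, NNReal.coe_one, mul_one, Nat.cast_ofNat, invOf_eq_inv, smul_eq_mul]
    ring
  simp only [gaussianPDF, Pi.zero_apply, Real.exp_zero, ENNReal.ofReal_one, mul_one]
  rw [← ENNReal.ofReal_mul (gaussianPDFReal_nonneg _ _ _), ← ENNReal.ofReal_mul
    (mul_nonneg (gaussianPDFReal_nonneg _ _ _) (gaussianPDFReal_nonneg _ _ _)), hexp,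
    ENNReal.ofReal_pow (gaussianPDFReal_nonneg _ _ _)]

theorem midpointPrekopaLeindler_stdGaussian (V : Type*) [NormedAddCommGroup V]
    [InnerProductSpace ℝ V] [FiniteDimensional ℝ V] [MeasurableSpace V] [BorelSpace V] :
    MidpointPrekopaLeindler (stdGaussian V) fun x y ↦ ‖x - y‖ ^ 2 / 4 := by
  let b := stdOrthonormalBasis ℝ V
  rw [stdGaussian_eq_map_pi_orthonormalBasis b]
  refine (MidpointPrekopaLeindler.pi fun _ ↦ midpointPrekopaLeindler_gaussianReal).map
    (Fintype.linearCombination ℝ b) (by fun_prop) fun x y ↦ ?_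
  rw [← map_sub, Fintype.linearCombination_apply, ← b.sum_sq_norm_inner_right, Finset.sum_div]
  simp [b.orthonormal.inner_right_fintype]

theorem MidpointPrekopaLeindler.measure_preimage_add_right_le {E : Type*} [AddCommGroup E]
    [Module ℝ E] [MeasurableSpace E] [MeasurableAdd E] [MeasurableNeg E] {μ : Measure E}
    [μ.IsNegInvariant] {c : E → E → ℝ} (hμ : MidpointPrekopaLeindler μ c)
    (hc : ∀ x y, 0 ≤ c x y) {K : Set E} (hK : MeasurableSet K) (hKconv : Convex ℝ K)
    (hKneg : ∀ x ∈ K, -x ∈ K) (v : E) : μ ((· + v) ⁻¹' K) ≤ μ K := by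
  have hKv (v : E) : MeasurableSet ((· + v) ⁻¹' K) := hK.preimage (measurable_add_const v)
  have hneg : μ ((· + -v) ⁻¹' K) = μ ((· + v) ⁻¹' K) := by
    rw [← Measure.measure_preimage_neg]
    congr 1
    ext x
    have hiff (z : E) : -z ∈ K ↔ z ∈ K := ⟨fun h ↦ neg_neg z ▸ hKneg _ h, hKneg z⟩
    simp only [Set.mem_preimage, ← neg_add, hiff]
  have hmul := hμ.measure_mul_measure_le (hKv v) (hKv (-v)) hK (a := 0)
    (fun x hx y hy ↦ by
      convert hKconv.midpoint_mem hx hy using 1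
      simp only [midpoint_eq_smul_add]
      module)
    fun x _ y _ ↦ hc x y
  rw [hneg, neg_zero, Real.exp_zero, ENNReal.ofReal_one, one_mul, ← sq] at hmul
  exact (ENNReal.pow_le_pow_left_iff two_ne_zero).1 hmul

theorem MidpointPrekopaLeindler.conv_apply_le {E : Type*} [AddCommGroup E] [Module ℝ E]
    [MeasurableSpace E] [MeasurableAdd₂ E] [MeasurableNeg E] {μ ν : Measure E} [SFinite μ]
    [IsProbabilityMeasure ν] [μ.IsNegInvariant] {c : E → E → ℝ} (hμ : MidpointPrekopaLeindler μ c)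
    (hc : ∀ x y, 0 ≤ c x y) {K : Set E} (hK : MeasurableSet K) (hKconv : Convex ℝ K)
    (hKneg : ∀ x ∈ K, -x ∈ K) : (μ ∗ ν) K ≤ μ K := by
  calc (μ ∗ ν) K = ∫⁻ v, μ ((· + v) ⁻¹' K) ∂ν := by
        rw [Measure.conv, Measure.map_apply measurable_add hK,
          Measure.prod_apply_symm (hK.preimage measurable_add)]
        rfl
    _ ≤ ∫⁻ _, μ K ∂ν := lintegral_mono fun v ↦
        hμ.measure_preimage_add_right_le hc hK hKconv hKneg v
    _ = μ K := by simp

end PrekopaLeindler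

section SubspaceGaussian

open scoped ENNReal

variable {V : Type*} [NormedAddCommGroup V] [InnerProductSpace ℝ V]

theorem norm_sq_orthogonalProjectionOnto_sup {E F : Submodule ℝ V} [E.HasOrthogonalProjection]
    [F.HasOrthogonalProjection] [(E ⊔ F).HasOrthogonalProjection] (h : E ⟂ F) (t : V) :
    ‖(E ⊔ F).orthogonalProjectionOnto t‖ ^ 2 =
      ‖E.orthogonalProjectionOnto t‖ ^ 2 + ‖F.orthogonalProjectionOnto t‖ ^ 2 := by
  have hE := E.starProjection_apply_mem t
  have hF := F.starProjection_apply_mem t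
  have hsup : (E ⊔ F).starProjection t = E.starProjection t + F.starProjection t := by
    refine Submodule.eq_starProjection_of_mem_orthogonal (Submodule.add_mem_sup hE hF) ?_
    rw [← Submodule.inf_orthogonal]
    refine ⟨?_, ?_⟩
    · rw [← sub_sub]
      exact sub_mem (E.sub_starProjection_mem_orthogonal t) (h.ge hF)
    · rw [add_comm, ← sub_sub]
      exact sub_mem (F.sub_starProjection_mem_orthogonal t) (h.le hE)
  simp only [← Submodule.norm_coe, Submodule.coe_orthogonalProjectionOnto_apply, hsup, sq]
  exact norm_add_sq_eq_norm_sq_add_norm_sq_of_inner_eq_zero _ _ (h.inner_eq hE hF)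

variable [FiniteDimensional ℝ V] [MeasurableSpace V]

/-- The standard Gaussian measure `γ_H` of a subspace `H`, regarded as a measure on the ambient
space. -/
noncomputable def subspaceGaussian (H : Submodule ℝ V) : Measure V :=
  (stdGaussian H).map ((↑) : H → V)

theorem subspaceGaussian_apply (H : Submodule ℝ V) {S : Set V} (hS : MeasurableSet S) :
    subspaceGaussian H S = stdGaussian H ((↑) ⁻¹' S) :=
  Measure.map_apply (by fun_prop) hS

variable [BorelSpace V]

instance (H : Submodule ℝ V) : IsProbabilityMeasure (subspaceGaussian H) :=
  Measure.isProbabilityMeasure_map (by fun_prop)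

theorem subspaceGaussian_eq_map_pi {ι : Type*} [Fintype ι] {H : Submodule ℝ V}
    (b : OrthonormalBasis ι ℝ H) :
    subspaceGaussian H =
      (Measure.pi fun _ : ι ↦ gaussianReal 0 1).map fun h ↦ ∑ j, h j • (b j : V) := by
  rw [subspaceGaussian, stdGaussian_eq_map_pi_orthonormalBasis b,
    Measure.map_map (by fun_prop) (by fun_prop)]
  congr 1
  ext h
  simp

theorem charFun_subspaceGaussian (H : Submodule ℝ V) (t : V) :
    charFun (subspaceGaussian H) t = Complex.exp (-‖H.orthogonalProjectionOnto t‖ ^ 2 / 2) := by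
  rw [← charFun_stdGaussian, charFun_apply, charFun_apply, subspaceGaussian,
    integral_map (by fun_prop) (by fun_prop)]
  simp_rw [← H.inner_orthogonalProjectionOnto_eq_of_mem_left]

theorem subspaceGaussian_top : subspaceGaussian (⊤ : Submodule ℝ V) = stdGaussian V := by
  refine Measure.ext_of_charFun (funext fun t ↦ ?_)
  rw [charFun_subspaceGaussian, charFun_stdGaussian, ← Submodule.norm_coe,
    Submodule.coe_orthogonalProjectionOnto_apply, Submodule.starProjection_top,
    ContinuousLinearMap.id_apply]

theorem map_orthogonalProjectionOnto_stdGaussian (H : Submodule ℝ V) :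
    (stdGaussian V).map H.orthogonalProjectionOnto = stdGaussian H := by
  have : IsProbabilityMeasure ((stdGaussian V).map H.orthogonalProjectionOnto) :=
    Measure.isProbabilityMeasure_map (by fun_prop)
  refine Measure.ext_of_charFun (funext fun t ↦ ?_)
  rw [charFun_stdGaussian, charFun_apply, integral_map (by fun_prop) (by fun_prop)]
  simp_rw [Submodule.inner_orthogonalProjectionOnto_eq_of_mem_right]
  rw [← charFun_apply, charFun_stdGaussian, Submodule.norm_coe]

theorem subspaceGaussian_conv_subspaceGaussian {E F : Submodule ℝ V} (h : E ⟂ F) :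
    subspaceGaussian E ∗ subspaceGaussian F = subspaceGaussian (E ⊔ F) := by
  refine Measure.ext_of_charFun (funext fun t ↦ ?_)
  simp only [charFun_conv, charFun_subspaceGaussian, ← Complex.exp_add, ← Complex.ofReal_pow,
    norm_sq_orthogonalProjectionOnto_sup h]
  push_cast
  ring_nf

instance (H : Submodule ℝ V) : (subspaceGaussian H).IsNegInvariant where
  neg_eq_self := by
    rw [Measure.neg, subspaceGaussian, Measure.map_map (by fun_prop) (by fun_prop)]
    conv_rhs => rw [← stdGaussian_map (LinearIsometryEquiv.neg ℝ (E := H)),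
      Measure.map_map (by fun_prop) (by fun_prop)]
    rfl

theorem midpointPrekopaLeindler_subspaceGaussian (H : Submodule ℝ V) :
    MidpointPrekopaLeindler (subspaceGaussian H) fun x y ↦ ‖x - y‖ ^ 2 / 4 :=
  (midpointPrekopaLeindler_stdGaussian H).map H.subtype (by fun_prop) fun x y ↦ by
    simp [← AddSubgroupClass.coe_sub]

theorem subspaceGaussian_apply_anti {E H : Submodule ℝ V} (hEH : E ≤ H) {K : Set V}
    (hK : MeasurableSet K) (hKconv : Convex ℝ K) (hKneg : ∀ x ∈ K, -x ∈ K) :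
    subspaceGaussian H K ≤ subspaceGaussian E K := by
  have hsup : E ⊔ Eᗮ ⊓ H = H := Submodule.sup_orthogonal_inf_of_hasOrthogonalProjection hEH
  rw [← hsup, ← subspaceGaussian_conv_subspaceGaussian
    (E.isOrtho_orthogonal_right.mono_right inf_le_left)]
  exact (midpointPrekopaLeindler_subspaceGaussian E).conv_apply_le (fun _ _ ↦ by positivity)
    hK hKconv hKneg

end SubspaceGaussian

section GaussianTails

variable {V : Type*} [NormedAddCommGroup V] [InnerProductSpace ℝ V] [FiniteDimensional ℝ V]
  [MeasurableSpace V] [BorelSpace V]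

theorem mgf_sq_gaussianReal {t : ℝ} (ht : t < 1 / 2) :
    mgf (fun x ↦ x ^ 2) (gaussianReal 0 1) t = (√(1 - 2 * t))⁻¹ := by
  have hdensity (x : ℝ) : gaussianPDFReal 0 1 x • Real.exp (t * x ^ 2) =
      (√(2 * Real.pi))⁻¹ * Real.exp (-(1 / 2 - t) * x ^ 2) := by
    rw [gaussianPDFReal_def, smul_eq_mul, mul_assoc, ← Real.exp_add]
    simp only [NNReal.coe_one]
    ring_nf
  simp only [mgf, integral_gaussianReal_eq_integral_smul one_ne_zero, hdensity]
  rw [integral_const_mul, integral_gaussian, ← Real.sqrt_inv, ← Real.sqrt_inv,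
    ← Real.sqrt_mul (by positivity)]
  have : 1 - 2 * t ≠ 0 := by linarith
  have : 1 / 2 - t ≠ 0 := by linarith
  congr 1
  field_simp

theorem mgf_norm_sq_stdGaussian {t : ℝ} (ht : t < 1 / 2) :
    mgf (fun x ↦ ‖x‖ ^ 2) (stdGaussian V) t = (√(1 - 2 * t))⁻¹ ^ Module.finrank ℝ V := by
  let b := stdOrthonormalBasis ℝ V
  have hnorm (h : Fin (Module.finrank ℝ V) → ℝ) :
      Real.exp (t * ‖∑ i, h i • b i‖ ^ 2) = ∏ i, Real.exp (t * h i ^ 2) := by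
    rw [← b.sum_sq_norm_inner_right, ← Real.exp_sum, Finset.mul_sum]
    simp [b.orthonormal.inner_right_fintype]
  have hmeas : Measurable fun h : Fin (Module.finrank ℝ V) → ℝ ↦ ∑ i, h i • b i := by fun_prop
  rw [mgf, stdGaussian_eq_map_pi_orthonormalBasis b,
    integral_map hmeas.aemeasurable (Continuous.aestronglyMeasurable (by fun_prop))]
  simp only [hnorm]
  rw [integral_fintype_prod_eq_pow fun x : ℝ ↦ Real.exp (t * x ^ 2), Fintype.card_fin,
    ← mgf_sq_gaussianReal ht, mgf]

theorem sqrt_one_add_inv_le_exp {s : ℝ} (hs : 0 ≤ s) :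
    (√(1 + s))⁻¹ ≤ Real.exp (-((s - s ^ 2 / 2) / 2)) := by
  have hlog : s - s ^ 2 / 2 ≤ Real.log (1 + s) := by
    refine le_trans ?_ (Real.le_log_one_add_of_nonneg hs)
    rw [le_div_iff₀ (by positivity)]
    nlinarith [pow_nonneg hs 3]
  rw [Real.exp_neg, Real.exp_half]
  gcongr
  exact (Real.le_log_iff_exp_le (by positivity)).1 hlog

theorem stdGaussian_real_norm_sq_le_exp {s : ℝ} (hs : 0 ≤ s) :
    (stdGaussian V).real {x | ‖x‖ ^ 2 ≤ (1 - s) * Module.finrank ℝ V} ≤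
      Real.exp (-(s ^ 2 / 4 * Module.finrank ℝ V)) := by
  set d := Module.finrank ℝ V with hd
  have hint : Integrable (fun x : V ↦ Real.exp (-(s / 2) * ‖x‖ ^ 2)) (stdGaussian V) := by
    refine .of_bound (by fun_prop) 1 (ae_of_all _ fun x ↦ ?_)
    rw [Real.norm_of_nonneg (Real.exp_pos _).le, Real.exp_le_one_iff]
    nlinarith [sq_nonneg ‖x‖]
  calc (stdGaussian V).real {x | ‖x‖ ^ 2 ≤ (1 - s) * d}
      ≤ Real.exp (- -(s / 2) * ((1 - s) * d)) * mgf (fun x ↦ ‖x‖ ^ 2) (stdGaussian V) (-(s / 2)) :=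
        measure_le_le_exp_mul_mgf _ (by linarith) hint
    _ = Real.exp (s / 2 * ((1 - s) * d)) * (√(1 + s))⁻¹ ^ d := by
        rw [mgf_norm_sq_stdGaussian (by linarith), ← hd]
        ring_nf
    _ ≤ Real.exp (s / 2 * ((1 - s) * d)) * Real.exp (-((s - s ^ 2 / 2) / 2)) ^ d := by
        gcongr
        exact sqrt_one_add_inv_le_exp hs
    _ = Real.exp (-(s ^ 2 / 4 * d)) := by
        rw [← Real.exp_nat_mul, ← Real.exp_add]
        ring_nf

theorem integral_abs_gaussianReal : ∫ x, |x| ∂(gaussianReal 0 1) = √(2 / Real.pi) := by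
  have hdensity (x : ℝ) : gaussianPDFReal 0 1 x • |x| =
      (√(2 * Real.pi))⁻¹ * (|x| ^ (1 : ℝ) * Real.exp (-(1 / 2) * |x| ^ (2 : ℝ))) := by
    simp only [gaussianPDFReal_def, NNReal.coe_one, mul_one, Nat.ofNat_nonneg, Real.sqrt_mul,
      mul_inv_rev, sub_zero, smul_eq_mul, Real.rpow_one, one_div, Real.rpow_ofNat, sq_abs, neg_mul]
    ring_nf
  simp only [integral_gaussianReal_eq_integral_smul one_ne_zero, hdensity]
  rw [integral_const_mul,
    integral_comp_abs (f := fun z : ℝ ↦ z ^ (1 : ℝ) * Real.exp (-(1 / 2) * z ^ (2 : ℝ))),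
    integral_rpow_mul_exp_neg_mul_rpow (by norm_num) (by norm_num) (by norm_num)]
  norm_num
  field_simp
  rw [Real.sq_sqrt zero_le_two]

theorem integral_abs_gaussianReal_le : ∫ x, |x| ∂(gaussianReal 0 1) ≤ 8 / 10 := by
  rw [integral_abs_gaussianReal]
  refine Real.sqrt_le_iff.2 ⟨by norm_num, ?_⟩
  rw [div_le_iff₀ Real.pi_pos]
  linarith [Real.pi_gt_d4]

theorem measurePreserving_eval_stdGaussian {ι : Type*} [Fintype ι] (i : ι) :
    MeasurePreserving (fun x : EuclideanSpace ℝ ι ↦ x i) (stdGaussian (EuclideanSpace ℝ ι))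
      (gaussianReal 0 1) := by
  refine ⟨by fun_prop, ?_⟩
  rw [← map_pi_eq_stdGaussian, Measure.map_map (by fun_prop) (by fun_prop)]
  exact (measurePreserving_eval (fun _ : ι ↦ gaussianReal 0 1) i).map_eq

theorem mul_le_abs_of_abs_le_one {a c : ℝ} (hc : |c| ≤ 1) : a * c ≤ |a| :=
  (le_abs_self _).trans (abs_mul a c ▸ mul_le_of_le_one_right (abs_nonneg a) hc)

theorem stdGaussian_real_le_sum_abs_sub_mul {ι : Type*} [Fintype ι] {x₀ : ι → ℝ}
    (hx₀ : ∀ i, |x₀ i| ≤ 1) {t : ℝ} (ht : 0 < t) :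
    (stdGaussian (EuclideanSpace ℝ ι)).real {y | t ≤ ∑ i, (|y i| - y i * x₀ i)} ≤
      8 / 10 * Fintype.card ι / t := by
  set γ := stdGaussian (EuclideanSpace ℝ ι)
  have hlaw (i : ι) : HasLaw (fun y : EuclideanSpace ℝ ι ↦ y i) (gaussianReal 0 1) γ :=
    (measurePreserving_eval_stdGaussian i).hasLaw
  have hid : Integrable (fun x : ℝ ↦ x) (gaussianReal 0 1) :=
    (memLp_id_gaussianReal 1).integrable le_rfl
  have hcoord (i : ι) : Integrable (fun y : EuclideanSpace ℝ ι ↦ y i) γ :=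
    (measurePreserving_eval_stdGaussian i).integrable_comp_of_integrable hid
  have habs (i : ι) : ∫ y : EuclideanSpace ℝ ι, |y i| ∂γ = ∫ x, |x| ∂(gaussianReal 0 1) :=
    (hlaw i).integral_comp (f := fun x ↦ |x|) (by fun_prop)
  have hzero (i : ι) : ∫ y : EuclideanSpace ℝ ι, y i ∂γ = 0 :=
    (hlaw i).integral_eq.trans integral_id_gaussianReal
  have hint (i : ι) : Integrable (fun y : EuclideanSpace ℝ ι ↦ |y i| - y i * x₀ i) γ :=
    (hcoord i).abs.sub ((hcoord i).mul_const _)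
  have hmean (i : ι) : ∫ y : EuclideanSpace ℝ ι, (|y i| - y i * x₀ i) ∂γ ≤ 8 / 10 := by
    rw [integral_sub (hcoord i).abs ((hcoord i).mul_const _), integral_mul_const,
      habs, hzero]
    linarith [integral_abs_gaussianReal_le]
  have hnonneg (y : EuclideanSpace ℝ ι) : 0 ≤ ∑ i, (|y i| - y i * x₀ i) :=
    Finset.sum_nonneg fun i _ ↦ sub_nonneg.2 (mul_le_abs_of_abs_le_one (hx₀ i))
  rw [le_div_iff₀' ht]
  calc t * γ.real {y | t ≤ ∑ i, (|y i| - y i * x₀ i)}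
      ≤ ∫ y : EuclideanSpace ℝ ι, ∑ i, (|y i| - y i * x₀ i) ∂γ :=
        mul_meas_ge_le_integral_of_nonneg (ae_of_all _ hnonneg)
          (integrable_finsetSum _ fun i _ ↦ hint i) t
    _ = ∑ i, ∫ y : EuclideanSpace ℝ ι, (|y i| - y i * x₀ i) ∂γ :=
        integral_finsetSum _ fun i _ ↦ hint i
    _ ≤ ∑ _i : ι, 8 / 10 := Finset.sum_le_sum fun i _ ↦ hmean i
    _ = 8 / 10 * Fintype.card ι := by simp [mul_comm]

end GaussianTails

section Polar

variable {V : Type*} [NormedAddCommGroup V] [InnerProductSpace ℝ V]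

/-- The polar of `S`, scaled by `r`. It is one-sided, which for symmetric `S` agrees with the
usual condition `|⟪x, y⟫| ≤ r`. -/
def polarSet (S : Set V) (r : ℝ) : Set V := {y | ∀ x ∈ S, inner ℝ x y ≤ r}

theorem isClosed_polarSet (S : Set V) (r : ℝ) : IsClosed (polarSet S r) := by
  simp only [polarSet, Set.ofPred_forall]
  exact isClosed_biInter fun x _ ↦ isClosed_le (by fun_prop) (by fun_prop)

variable [FiniteDimensional ℝ V] [MeasurableSpace V] [BorelSpace V]

theorem stdGaussian_real_inter_mul_polarSet_inter_le {S : Set V} (hS : MeasurableSet S) (q r : ℝ) :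
    (stdGaussian V).real (S ∩ {x | q ≤ ‖x‖ ^ 2}) *
      (stdGaussian V).real (polarSet S r ∩ {y | q ≤ ‖y‖ ^ 2}) ≤ Real.exp (-((q - r) / 2)) := by
  have hq : MeasurableSet {x : V | q ≤ ‖x‖ ^ 2} := measurableSet_le (by fun_prop) (by fun_prop)
  have hmul := (midpointPrekopaLeindler_stdGaussian V).measure_mul_measure_le (hS.inter hq)
    ((isClosed_polarSet S r).measurableSet.inter hq) .univ (a := (q - r) / 2)
    (fun _ _ _ _ ↦ Set.mem_univ _) fun x hx y hy ↦ by
      have hxy : inner ℝ x y ≤ r := hy.1 x hx.1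
      have hxq : q ≤ ‖x‖ ^ 2 := hx.2
      have hyq : q ≤ ‖y‖ ^ 2 := hy.2
      rw [norm_sub_sq_real]
      linarith
  rw [measure_univ, one_pow, mul_one] at hmul
  rw [Measure.real, Measure.real, ← ENNReal.toReal_mul]
  exact ENNReal.toReal_le_of_le_ofReal (Real.exp_pos _).le hmul

theorem stdGaussian_real_sub_mul_polarSet_sub_le {S : Set V} (hS : MeasurableSet S) {s : ℝ}
    (hs : 0 ≤ s) (hS_le : Real.exp (-(s ^ 2 / 4 * Module.finrank ℝ V)) ≤ (stdGaussian V).real S)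
    (r : ℝ) :
    ((stdGaussian V).real S - Real.exp (-(s ^ 2 / 4 * Module.finrank ℝ V))) *
      ((stdGaussian V).real (polarSet S r) - Real.exp (-(s ^ 2 / 4 * Module.finrank ℝ V))) ≤
      Real.exp (-(((1 - s) * Module.finrank ℝ V - r) / 2)) := by
  set q := (1 - s) * Module.finrank ℝ V
  have htail (A : Set V) :
      (stdGaussian V).real A - Real.exp (-(s ^ 2 / 4 * Module.finrank ℝ V)) ≤
        (stdGaussian V).real (A ∩ {x | q ≤ ‖x‖ ^ 2}) := by
    have hcover : A ⊆ A ∩ {x | q ≤ ‖x‖ ^ 2} ∪ {x | ‖x‖ ^ 2 ≤ q} := fun x hx ↦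
      (le_total q (‖x‖ ^ 2)).imp (fun h ↦ ⟨hx, h⟩) id
    linarith [(measureReal_mono hcover).trans (measureReal_union_le (μ := stdGaussian V) _ _),
      stdGaussian_real_norm_sq_le_exp (V := V) hs]
  refine le_trans ?_ (stdGaussian_real_inter_mul_polarSet_inter_le hS q r)
  exact (mul_le_mul_of_nonneg_left (htail _) (sub_nonneg.2 hS_le)).trans
    (mul_le_mul_of_nonneg_right (htail S) measureReal_nonneg)

theorem hundred_le_exp_five : 100 ≤ Real.exp 5 := by
  calc (100 : ℝ) ≤ 2.7 ^ 5 := by norm_num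
    _ ≤ Real.exp 1 ^ 5 := by
        gcongr
        linarith [Real.exp_one_gt_d9]
    _ = Real.exp 5 := by rw [← Real.exp_nat_mul]; norm_num

theorem stdGaussian_real_polarSet_le {n : ℝ} (hn : 2500 ≤ n)
    (hdim : 999 / 1000 * n ≤ Module.finrank ℝ V) {S : Set V} (hS : MeasurableSet S)
    (hS_le : Real.exp (-(n / 2500)) ≤ (stdGaussian V).real S) :
    (stdGaussian V).real (polarSet S (86 / 100 * n)) ≤ 3 * Real.exp (-(24 / 10000 * n)) := by
  set d : ℝ := (Module.finrank ℝ V : ℝ)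
  set τ := Real.exp (-((1 / 10) ^ 2 / 4 * d))
  set η := Real.exp (-(24 / 10000 * n)) with hη
  have hη_pos : 0 < η := Real.exp_pos _
  have hτη : τ ≤ η := Real.exp_le_exp.2 (by linarith)
  have hη_le : 2 * η ≤ Real.exp (-(n / 2500)) := by
    have : η * Real.exp 5 ≤ Real.exp (-(n / 2500)) := by
      rw [← Real.exp_add, Real.exp_le_exp]
      linarith
    nlinarith [hundred_le_exp_five]
  have hτ_le : τ ≤ (stdGaussian V).real S := by linarith
  have hη_sq : Real.exp (-(((1 - 1 / 10) * d - 86 / 100 * n) / 2)) ≤ η * η := by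
    rw [hη, ← Real.exp_add, Real.exp_le_exp]
    linarith
  set p := (stdGaussian V).real (polarSet S (86 / 100 * n))
  have hmul : ((stdGaussian V).real S - τ) * (p - τ) ≤ η * η :=
    (stdGaussian_real_sub_mul_polarSet_sub_le hS (by norm_num) hτ_le _).trans hη_sq
  suffices p - τ ≤ 2 * η by linarith
  by_contra! hlt
  nlinarith

theorem stdGaussian_polarSet_inter (E : Submodule ℝ V) (K : Set V) (r : ℝ) :
    stdGaussian V (polarSet (K ∩ E) r) = stdGaussian E (polarSet ((↑) ⁻¹' K) r) := by
  rw [← map_orthogonalProjectionOnto_stdGaussian,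
    Measure.map_apply (by fun_prop) (isClosed_polarSet _ _).measurableSet]
  congr 1
  ext y
  exact ⟨fun h x hx ↦
      (E.inner_orthogonalProjectionOnto_eq_of_mem_left x y).trans_le (h x ⟨hx, x.2⟩),
    fun h x hx ↦ (E.inner_orthogonalProjectionOnto_eq_of_mem_left ⟨x, hx.2⟩ y).symm.trans_le
      (h ⟨x, hx.2⟩ hx.1)⟩

theorem stdGaussian_real_polarSet_inter_le {n : ℝ} (hn : 2500 ≤ n) {E H : Submodule ℝ V}
    (hEH : E ≤ H) (hdim : 999 / 1000 * n ≤ Module.finrank ℝ E) {K : Set V} (hK : MeasurableSet K)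
    (hKconv : Convex ℝ K) (hKneg : ∀ x ∈ K, -x ∈ K)
    (hK_le : Real.exp (-(n / 2500)) ≤ (subspaceGaussian H).real K) :
    (stdGaussian V).real (polarSet (K ∩ E) (86 / 100 * n)) ≤
      3 * Real.exp (-(24 / 10000 * n)) := by
  rw [measureReal_def, stdGaussian_polarSet_inter, ← measureReal_def]
  refine stdGaussian_real_polarSet_le hn hdim (hK.preimage (by fun_prop)) (hK_le.trans ?_)
  rw [measureReal_def, measureReal_def, ← subspaceGaussian_apply E hK]
  exact ENNReal.toReal_mono (measure_ne_top _ _) (subspaceGaussian_apply_anti hEH hK hKconv hKneg)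

end Polar

section Convex

theorem zero_mem_interior_of_convex_of_neg_mem {V : Type*} [AddCommGroup V] [Module ℝ V]
    [TopologicalSpace V] [IsTopologicalAddGroup V] [ContinuousConstSMul ℝ V] {K : Set V}
    (hK : Convex ℝ K) (hKneg : ∀ x ∈ K, -x ∈ K) (hKint : (interior K).Nonempty) :
    0 ∈ interior K := by
  obtain ⟨w, hw⟩ := hKint
  have hmem : (1 / 2 : ℝ) • w + (1 / 2 : ℝ) • -w ∈ interior K :=
    hK.combo_interior_closure_mem_interior hw (subset_closure (hKneg w (interior_subset hw)))
      (by norm_num) (by norm_num) (by norm_num)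
  rwa [smul_neg, add_neg_cancel] at hmem

theorem smul_mem_of_mem_closure {V : Type*} [NormedAddCommGroup V] [NormedSpace ℝ V]
    [FiniteDimensional ℝ V] {K : Set V} (hK : Convex ℝ K) (hKneg : ∀ x ∈ K, -x ∈ K)
    (h0 : 0 ∈ K) {c : ℝ} (hc0 : 0 ≤ c) (hc1 : c < 1) {x : V} (hx : x ∈ closure K) :
    c • x ∈ K := by
  let W := Submodule.span ℝ K
  let K' : Set W := (↑) ⁻¹' K
  have hK' : Convex ℝ K' := hK.linear_preimage W.subtype
  have hspan : affineSpan ℝ K' = ⊤ := by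
    rw [AffineSubspace.affineSpan_eq_top_iff_vectorSpan_eq_top_of_nonempty ℝ W W ⟨0, h0⟩,
      vectorSpan_eq_span_vsub_set_right ℝ (show (0 : W) ∈ K' from h0)]
    have hspan : Submodule.span ℝ K' = ⊤ := Submodule.span_span_coe_preimage
    simpa using hspan
  have hzero : 0 ∈ interior K' := zero_mem_interior_of_convex_of_neg_mem hK'
    (fun w hw ↦ hKneg w hw) (hK'.interior_nonempty_iff_affineSpan_eq_top.2 hspan)
  have hxW : x ∈ W :=
    closure_minimal Submodule.subset_span (Submodule.closed_of_finiteDimensional W) hx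
  have hxK' : (⟨x, hxW⟩ : W) ∈ closure K' := by
    have himage : ((↑) '' K' : Set V) = K :=
      Set.image_preimage_eq_of_subset fun y hy ↦ ⟨⟨y, Submodule.subset_span hy⟩, rfl⟩
    rwa [closure_subtype, himage]
  have hmem := interior_subset (hK'.combo_interior_closure_mem_interior hzero hxK'
    (sub_pos.2 hc1) hc0 (sub_add_cancel 1 c))
  simpa [K'] using hmem

end Convex

section Cube

open scoped Topology

variable {ι : Type*}

/-- The cube `[-1, 1] ^ ι`. -/
def cube (ι : Type*) : Set (EuclideanSpace ℝ ι) := {x | ∀ i, |x i| ≤ 1}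

theorem isClosed_cube : IsClosed (cube ι) := by
  simp only [cube, Set.ofPred_forall]
  exact isClosed_iInter fun i ↦ isClosed_le (by fun_prop) (by fun_prop)

theorem isCompact_cube [Finite ι] : IsCompact (cube ι) := by
  have hpi : IsCompact (Set.univ.pi fun _ : ι ↦ Set.Icc (-1 : ℝ) 1) :=
    isCompact_univ_pi fun _ ↦ isCompact_Icc
  convert (PiLp.homeomorph 2 fun _ : ι ↦ ℝ).isCompact_preimage.2 hpi
  ext x
  simp only [cube, abs_le, Set.mem_preimage, Set.mem_univ_pi, Set.mem_Icc, Set.mem_ofPred_eq]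
  rfl

variable [Fintype ι]

/-- The coordinates in which `x` lies on the boundary of the cube. These are the coordinates that
count towards a partial coloring. -/
noncomputable def tightCoords (x : EuclideanSpace ℝ ι) : Finset ι := {i | |x i| = 1}

theorem mem_tightCoords {x : EuclideanSpace ℝ ι} {i : ι} : i ∈ tightCoords x ↔ |x i| = 1 := by
  simp [tightCoords]

theorem eventually_sub_smul_add_smul_mem_cube {x x₀ y : EuclideanSpace ℝ ι} (hx : x ∈ cube ι)
    (hx₀ : x₀ ∈ cube ι) (hy : ∀ i ∈ tightCoords x, y i = 0) :
    ∀ᶠ s : ℝ in 𝓝[>] 0, (1 - s) • x + s • (x₀ + y) ∈ cube ι := by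
  refine Filter.eventually_all.2 fun i ↦ ?_
  simp only [PiLp.add_apply, PiLp.smul_apply, smul_eq_mul]
  by_cases hi : i ∈ tightCoords x
  · filter_upwards [Ioo_mem_nhdsGT one_pos] with s hs
    have hconv := (convex_Icc (-1 : ℝ) 1) (abs_le.1 (hx i)) (abs_le.1 (hx₀ i))
      (sub_nonneg.2 hs.2.le) hs.1.le (sub_add_cancel 1 s)
    rw [hy i hi, add_zero]
    exact abs_le.2 hconv
  · have hlt : |x i| < 1 := lt_of_le_of_ne (hx i) fun h ↦ hi (mem_tightCoords.2 h)
    have hcont : Continuous fun s : ℝ ↦ |(1 - s) * x i + s * (x₀ i + y i)| := by fun_prop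
    refine (hcont.continuousAt.eventually_lt_const ?_).filter_mono nhdsWithin_le_nhds |>.mono
      fun _ ↦ le_of_lt
    simpa using hlt

theorem exists_mem_cube_forall_inner_le_of_isClosed {K : Set (EuclideanSpace ℝ ι)}
    (hK : IsClosed K) (hKconv : Convex ℝ K) (h0 : 0 ∈ K) {x₀ : EuclideanSpace ℝ ι}
    (hx₀ : x₀ ∈ cube ι) (g : EuclideanSpace ℝ ι) :
    ∃ x ∈ cube ι, x - x₀ ∈ K ∧
      ∀ y ∈ K, (∀ i ∈ tightCoords x, y i = 0) → inner ℝ y g ≤ inner ℝ (x - x₀) g := by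
  have hcompact : IsCompact (cube ι ∩ (· - x₀) ⁻¹' K) :=
    isCompact_cube.inter_right (hK.preimage (by fun_prop))
  obtain ⟨x, ⟨hx, hxK⟩, hmax⟩ := hcompact.exists_isMaxOn ⟨x₀, hx₀, by simpa using h0⟩
    (f := fun x ↦ inner ℝ x g) (by fun_prop)
  refine ⟨x, hx, hxK, fun y hy hyx ↦ ?_⟩
  obtain ⟨s, hs, hs01⟩ := ((eventually_sub_smul_add_smul_mem_cube hx hx₀ hyx).and
    (Ioo_mem_nhdsGT one_pos)).exists
  have hsK : (1 - s) • x + s • (x₀ + y) - x₀ ∈ K := by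
    convert hKconv hxK hy (sub_nonneg.2 hs01.2.le) hs01.1.le (sub_add_cancel 1 s) using 1
    module
  have hle : inner ℝ ((1 - s) • x + s • (x₀ + y)) g ≤ inner ℝ x g := hmax ⟨hs, hsK⟩
  simp only [inner_add_left, real_inner_smul_left] at hle
  rw [inner_sub_left]
  nlinarith [hs01.1]

theorem inner_sub_le_sum_abs_sub_mul {x : EuclideanSpace ℝ ι} (hx : x ∈ cube ι)
    (x₀ g : EuclideanSpace ℝ ι) : inner ℝ (x - x₀) g ≤ ∑ i, (|g i| - g i * x₀ i) := by
  rw [PiLp.inner_apply]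
  refine Finset.sum_le_sum fun i _ ↦ ?_
  calc inner ℝ ((x - x₀) i) (g i) = g i * x i - g i * x₀ i := mul_sub _ _ _
    _ ≤ |g i| - g i * x₀ i := sub_le_sub_right (mul_le_abs_of_abs_le_one (hx i)) _

theorem exists_mem_cube_forall_mul_inner_le {K : Set (EuclideanSpace ℝ ι)}
    (hK : Convex ℝ K) (hKneg : ∀ x ∈ K, -x ∈ K) (h0 : 0 ∈ K) {x₀ : EuclideanSpace ℝ ι}
    (hx₀ : x₀ ∈ cube ι) (g : EuclideanSpace ℝ ι) {c : ℝ} (hc0 : 0 < c) (hc1 : c < 1) :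
    ∃ x ∈ cube ι, x - x₀ ∈ K ∧ ∀ y ∈ closure K, (∀ i ∈ tightCoords x, y i = 0) →
      c * inner ℝ y g ≤ ∑ i, (|g i| - g i * x₀ i) := by
  obtain ⟨x, hx, hxK, hmax⟩ := exists_mem_cube_forall_inner_le_of_isClosed
    (isClosed_closure.smul_of_ne_zero hc0.ne') (hK.closure.smul c)
    ⟨0, subset_closure h0, smul_zero c⟩ hx₀ g
  obtain ⟨z, hz, hzx⟩ := hxK
  refine ⟨x, hx, hzx ▸ smul_mem_of_mem_closure hK hKneg h0 hc0.le hc1 hz, fun y hy hyx ↦ ?_⟩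
  rw [← real_inner_smul_left]
  exact (hmax _ (Set.smul_mem_smul_set hy) fun i hi ↦ by simp [hyx i hi]).trans
    (inner_sub_le_sum_abs_sub_mul hx x₀ g)

theorem exists_tightCoords_nonempty_of_not_subset_cube {K : Set (EuclideanSpace ℝ ι)}
    (hK : Convex ℝ K) (hKneg : ∀ x ∈ K, -x ∈ K) (h0 : 0 ∈ K) (hKcube : ¬K ⊆ cube ι)
    {x₀ : EuclideanSpace ℝ ι} (hx₀ : x₀ ∈ cube ι) :
    ∃ x ∈ cube ι, x - x₀ ∈ K ∧ (tightCoords x).Nonempty := by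
  classical
  contrapose! hKcube with hempty
  have hbound {y : EuclideanSpace ℝ ι} (hy : y ∈ K) (g : EuclideanSpace ℝ ι) :
      inner ℝ y g ≤ ∑ i, (|g i| - g i * x₀ i) := by
    have hsub : Set.Icc (0 : ℝ) 1 ⊆ {c | c * inner ℝ y g ≤ ∑ i, (|g i| - g i * x₀ i)} := by
      rw [← closure_Ioo zero_ne_one]
      refine closure_minimal (fun c hc ↦ ?_) (isClosed_le (by fun_prop) (by fun_prop))
      obtain ⟨x, hx, hxK, hmax⟩ :=
        exists_mem_cube_forall_mul_inner_le hK hKneg h0 hx₀ g hc.1 hc.2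
      exact hmax y (subset_closure hy) (by simp [hempty x hx hxK])
    simpa using hsub (Set.right_mem_Icc.2 zero_le_one)
  have hle {y : EuclideanSpace ℝ ι} (hy : y ∈ K) (i : ι) (r : ℝ) :
      r * y i ≤ |r| - r * x₀ i := by
    have hy := hbound hy (EuclideanSpace.single i r)
    rw [Fintype.sum_eq_single i fun j hj ↦ by simp [hj]] at hy
    simpa [EuclideanSpace.inner_single_right] using hy
  refine fun y hy i ↦ abs_le.2 ⟨?_, ?_⟩
  · have hpos := hle (hKneg y hy) i 1
    have hneg := hle hy i (-1)
    simp only [abs_neg, abs_one, PiLp.neg_apply] at hpos hneg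
    linarith
  · have hpos := hle hy i 1
    have hneg := hle (hKneg y hy) i (-1)
    simp only [abs_neg, abs_one, PiLp.neg_apply] at hpos hneg
    linarith

end Cube

section CubeMeasure

variable {ι : Type*} [Fintype ι]

theorem gaussianPDFReal_zero_one_le (x : ℝ) : gaussianPDFReal 0 1 x ≤ 4 / 10 := by
  have hsqrt : (√(2 * Real.pi * ((1 : NNReal) : ℝ)))⁻¹ ≤ 4 / 10 := by
    rw [inv_le_comm₀ (by positivity) (by norm_num), NNReal.coe_one]
    exact Real.le_sqrt_of_sq_le (by linarith [Real.pi_gt_d2])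
  have hexp : Real.exp (-(x - 0) ^ 2 / (2 * ((1 : NNReal) : ℝ))) ≤ 1 :=
    Real.exp_le_one_iff.2 (div_nonpos_of_nonpos_of_nonneg (neg_nonpos.2 (sq_nonneg _)) (by simp))
  calc gaussianPDFReal 0 1 x ≤ 4 / 10 * 1 :=
        mul_le_mul hsqrt hexp (Real.exp_pos _).le (by norm_num)
    _ = 4 / 10 := mul_one _

theorem gaussianReal_Icc_le : gaussianReal 0 1 (Set.Icc (-1) 1) ≤ ENNReal.ofReal (8 / 10) := by
  calc gaussianReal 0 1 (Set.Icc (-1) 1)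
      = ∫⁻ x in Set.Icc (-1 : ℝ) 1, gaussianPDF 0 1 x := gaussianReal_apply 0 one_ne_zero _
    _ ≤ ∫⁻ _ in Set.Icc (-1 : ℝ) 1, ENNReal.ofReal (4 / 10) :=
        lintegral_mono fun x ↦ ENNReal.ofReal_le_ofReal (gaussianPDFReal_zero_one_le x)
    _ = ENNReal.ofReal (8 / 10) := by
        rw [setLIntegral_const, Real.volume_Icc, ← ENNReal.ofReal_mul (by norm_num)]
        norm_num

theorem stdGaussian_real_cube_le :
    (stdGaussian (EuclideanSpace ℝ ι)).real (cube ι) ≤ (8 / 10) ^ Fintype.card ι := by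
  have hpre : WithLp.toLp 2 ⁻¹' cube ι = Set.univ.pi fun _ : ι ↦ Set.Icc (-1 : ℝ) 1 := by
    ext x
    simp only [cube, abs_le, Set.mem_preimage, Set.mem_univ_pi, Set.mem_Icc, Set.mem_ofPred_eq]
  refine ENNReal.toReal_le_of_le_ofReal (by positivity) ?_
  rw [← map_pi_eq_stdGaussian, Measure.map_apply (by fun_prop) isClosed_cube.measurableSet, hpre,
    Measure.pi_pi, Finset.prod_const, Finset.card_univ, ENNReal.ofReal_pow (by norm_num)]
  gcongr
  exact gaussianReal_Icc_le

end CubeMeasure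

section PartialColoring

variable {ι : Type*}

/-- The coordinate subspace of the vectors that vanish on `I`. For `I` the tight coordinates of a
point `x` of the cube, it contains the directions in which `x` can move freely. -/
noncomputable def vanishingSubspace (I : Finset ι) : Submodule ℝ (EuclideanSpace ℝ ι) :=
  LinearMap.ker (LinearMap.pi fun i : I ↦ (EuclideanSpace.proj (𝕜 := ℝ) (i : ι)).toLinearMap)

theorem mem_vanishingSubspace {I : Finset ι} {x : EuclideanSpace ℝ ι} :
    x ∈ vanishingSubspace I ↔ ∀ i ∈ I, x i = 0 := by
  simp [vanishingSubspace, funext_iff]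

theorem finrank_le_finrank_inf_ker_add_finrank {𝕜 V W : Type*} [DivisionRing 𝕜] [AddCommGroup V]
    [Module 𝕜 V] [AddCommGroup W] [Module 𝕜 W] [FiniteDimensional 𝕜 V] [FiniteDimensional 𝕜 W]
    (H : Submodule 𝕜 V) (f : V →ₗ[𝕜] W) :
    Module.finrank 𝕜 H ≤ Module.finrank 𝕜 ↥(H ⊓ LinearMap.ker f) + Module.finrank 𝕜 W := by
  have hinf := Submodule.finrank_sup_add_finrank_inf_eq H (LinearMap.ker f)
  have hsup := Submodule.finrank_le (H ⊔ LinearMap.ker f)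
  have hker := f.finrank_range_add_finrank_ker
  have hrange := Submodule.finrank_le (LinearMap.range f)
  lia

theorem finrank_le_finrank_inf_vanishingSubspace_add_card [Finite ι]
    (H : Submodule ℝ (EuclideanSpace ℝ ι)) (I : Finset ι) :
    Module.finrank ℝ H ≤ Module.finrank ℝ ↥(H ⊓ vanishingSubspace I) + I.card := by
  have hle := finrank_le_finrank_inf_ker_add_finrank H
    (LinearMap.pi fun i : I ↦ (EuclideanSpace.proj (𝕜 := ℝ) (i : ι)).toLinearMap)
  rwa [Module.finrank_fintype_fun_eq_card, Fintype.card_coe] at hle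

variable [Fintype ι]

theorem card_filter_card_lt_le {ε : ℝ} (hε0 : 0 < ε) (hε1 : ε ≤ 1) (m : ℝ) :
    (({I | (I.card : ℝ) < m} : Finset (Finset ι)).card : ℝ) ≤
      Real.exp (ε * Fintype.card ι - m * Real.log ε) := by
  have hterm {I : Finset ι} (hI : I ∈ ({I | (I.card : ℝ) < m} : Finset (Finset ι))) :
      Real.exp (m * Real.log ε) ≤ ε ^ I.card := by
    rw [← Real.rpow_natCast, Real.rpow_def_of_pos hε0, mul_comm m]
    exact Real.exp_le_exp.2 (mul_le_mul_of_nonpos_left (Finset.mem_filter.1 hI).2.le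
      (Real.log_nonpos hε0.le hε1))
  rw [Real.exp_sub, le_div_iff₀ (Real.exp_pos _)]
  calc (({I | (I.card : ℝ) < m} : Finset (Finset ι)).card : ℝ) * Real.exp (m * Real.log ε)
      ≤ ∑ I : Finset ι with (I.card : ℝ) < m, ε ^ I.card := by
        simpa only [nsmul_eq_mul] using Finset.card_nsmul_le_sum _ _ _ fun I ↦ hterm
    _ ≤ ∑ I : Finset ι, ε ^ I.card :=
        Finset.sum_le_univ_sum_of_nonneg fun I ↦ by positivity
    _ = (ε + 1) ^ Fintype.card ι := by
        simpa using Fintype.sum_pow_mul_eq_add_pow ι ε 1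
    _ ≤ Real.exp ε ^ Fintype.card ι := by
        gcongr
        exact Real.add_one_le_exp ε
    _ = Real.exp (ε * Fintype.card ι) := by rw [← Real.exp_nat_mul, mul_comm]

theorem exists_sum_abs_sub_mul_lt_forall_notMem_polarSet {κ : Type*} {n : ℝ}
    (hn : n = Fintype.card ι) (hn2500 : 2500 ≤ n)
    {H : Submodule ℝ (EuclideanSpace ℝ ι)} {F : Finset κ}
    (hF : (F.card : ℝ) ≤ Real.exp (n / 2500)) {E : κ → Submodule ℝ (EuclideanSpace ℝ ι)}
    (hEH : ∀ k ∈ F, E k ≤ H) (hdim : ∀ k ∈ F, 999 / 1000 * n ≤ Module.finrank ℝ (E k))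
    {K : Set (EuclideanSpace ℝ ι)} (hK : MeasurableSet K) (hKconv : Convex ℝ K)
    (hKneg : ∀ x ∈ K, -x ∈ K) (hK_le : Real.exp (-(n / 2500)) ≤ (subspaceGaussian H).real K)
    {x₀ : EuclideanSpace ℝ ι} (hx₀ : x₀ ∈ cube ι) :
    ∃ g : EuclideanSpace ℝ ι, ∑ i, (|g i| - g i * x₀ i) < 85 / 100 * n ∧
      ∀ k ∈ F, g ∉ polarSet (K ∩ E k) (86 / 100 * n) := by
  set A := {g : EuclideanSpace ℝ ι | 85 / 100 * n ≤ ∑ i, (|g i| - g i * x₀ i)}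
  set B := ⋃ k ∈ F, polarSet (K ∩ E k) (86 / 100 * n)
  set γ := stdGaussian (EuclideanSpace ℝ ι)
  have hA : γ.real A ≤ 8 / 10 / (85 / 100) := by
    calc γ.real A ≤ 8 / 10 * Fintype.card ι / (85 / 100 * n) :=
          stdGaussian_real_le_sum_abs_sub_mul hx₀ (by linarith)
      _ = 8 / 10 / (85 / 100) := by rw [← hn]; field_simp
  have hB : γ.real B ≤ 3 / 100 := by
    calc γ.real B ≤ ∑ k ∈ F, γ.real (polarSet (K ∩ E k) (86 / 100 * n)) :=
          measureReal_biUnion_finset_le _ _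
      _ ≤ F.card * (3 * Real.exp (-(24 / 10000 * n))) := by
          rw [← nsmul_eq_mul]
          exact Finset.sum_le_card_nsmul _ _ _ fun k hk ↦ stdGaussian_real_polarSet_inter_le hn2500
            (hEH k hk) (hdim k hk) hK hKconv hKneg hK_le
      _ ≤ Real.exp (n / 2500) * (3 * Real.exp (-(24 / 10000 * n))) := by gcongr
      _ = 3 * Real.exp (-(n / 500)) := by
          rw [mul_left_comm, ← Real.exp_add]
          ring_nf
      _ ≤ 3 * Real.exp (-5) := by
          gcongr
          linarith
      _ ≤ 3 / 100 := by
          rw [Real.exp_neg, ← div_eq_mul_inv]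
          exact div_le_div_of_nonneg_left (by norm_num) (by norm_num) hundred_le_exp_five
  have hlt : γ.real (A ∪ B) < 1 :=
    (measureReal_union_le A B).trans_lt (by linarith)
  obtain ⟨g, hg⟩ : ∃ g, g ∉ A ∪ B := by
    by_contra! hall
    rw [Set.eq_univ_of_forall hall, probReal_univ] at hlt
    exact hlt.false
  exact ⟨g, not_le.1 fun h ↦ hg (.inl h), fun k hk h ↦ hg (.inr (Set.mem_biUnion hk h))⟩

theorem card_filter_card_lt_card_div_le :
    (({I | (I.card : ℝ) < Fintype.card ι / 30000} : Finset (Finset ι)).card : ℝ) ≤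
      Real.exp (Fintype.card ι / 2500) := by
  have hlog : -(14 * Real.log 2) ≤ Real.log (1 / 15000) := by
    rw [one_div, Real.log_inv, neg_le_neg_iff]
    exact_mod_cast (Real.log_le_log (by norm_num) (by norm_num : (15000 : ℝ) ≤ 2 ^ 14)).trans_eq
      (Real.log_pow 2 14)
  refine (card_filter_card_lt_le (by norm_num : (0 : ℝ) < 1 / 15000) (by norm_num) _).trans
    (Real.exp_le_exp.2 ?_)
  nlinarith [Real.log_two_lt_d9, (Fintype.card ι).cast_nonneg (α := ℝ)]

theorem exists_card_div_le_card_tightCoords {H : Submodule ℝ (EuclideanSpace ℝ ι)}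
    (hι : 2500 ≤ (Fintype.card ι : ℝ))
    (hdim : (1 - 1 / 2500) * Fintype.card ι ≤ (Module.finrank ℝ H : ℝ))
    {K : Set (EuclideanSpace ℝ ι)} (hK : Convex ℝ K) (hKneg : ∀ x ∈ K, -x ∈ K) (h0 : 0 ∈ K)
    (hK_le : Real.exp (-(Fintype.card ι / 2500)) ≤ (subspaceGaussian H).real K)
    {x₀ : EuclideanSpace ℝ ι} (hx₀ : x₀ ∈ cube ι) :
    ∃ x ∈ cube ι, x - x₀ ∈ K ∧ Fintype.card ι / 30000 ≤ ((tightCoords x).card : ℝ) := by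
  obtain ⟨g, hg, hgpolar⟩ := exists_sum_abs_sub_mul_lt_forall_notMem_polarSet rfl hι
    card_filter_card_lt_card_div_le (E := fun I ↦ H ⊓ vanishingSubspace I)
    (fun _ _ ↦ inf_le_left) (fun I hI ↦ by
      have hcard := (Finset.mem_filter.1 hI).2
      have hfinrank : (Module.finrank ℝ H : ℝ) ≤
          Module.finrank ℝ ↥(H ⊓ vanishingSubspace I) + I.card := by
        exact_mod_cast finrank_le_finrank_inf_vanishingSubspace_add_card H I
      linarith)
    isClosed_closure.measurableSet hK.closure
    (fun x hx ↦ map_mem_closure continuous_neg hx hKneg)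
    (hK_le.trans (measureReal_mono subset_closure)) hx₀
  obtain ⟨x, hx, hxK, hmax⟩ := exists_mem_cube_forall_mul_inner_le hK hKneg h0 hx₀ g
    (by norm_num : (0 : ℝ) < 85 / 86) (by norm_num)
  refine ⟨x, hx, hxK, ?_⟩
  by_contra! hlt
  refine hgpolar (tightCoords x) (Finset.mem_filter.2 ⟨Finset.mem_univ _, hlt⟩) ?_
  intro y ⟨hyK, hy⟩
  linarith [hmax y hyK (mem_vanishingSubspace.1 hy.2)]

theorem exists_tightCoords_nonempty_of_exp_le [Nonempty ι] {K : Set (EuclideanSpace ℝ ι)}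
    (hK : Convex ℝ K) (hKneg : ∀ x ∈ K, -x ∈ K) (h0 : 0 ∈ K)
    (hK_le : Real.exp (-(Fintype.card ι / 2500)) ≤ (stdGaussian (EuclideanSpace ℝ ι)).real K)
    {x₀ : EuclideanSpace ℝ ι} (hx₀ : x₀ ∈ cube ι) :
    ∃ x ∈ cube ι, x - x₀ ∈ K ∧ (tightCoords x).Nonempty := by
  refine exists_tightCoords_nonempty_of_not_subset_cube hK hKneg h0 (fun hsub ↦ ?_) hx₀
  have hlt : (8 / 10 : ℝ) ^ Fintype.card ι < Real.exp (-(Fintype.card ι / 2500)) := by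
    calc (8 / 10 : ℝ) ^ Fintype.card ι < Real.exp (-(1 / 2500)) ^ Fintype.card ι :=
          pow_lt_pow_left₀ (by linarith [Real.add_one_le_exp (-(1 / 2500))]) (by norm_num)
            Fintype.card_ne_zero
      _ = Real.exp (-(Fintype.card ι / 2500)) := by
          rw [← Real.exp_nat_mul]
          ring_nf
  exact (hlt.trans_le hK_le).not_ge ((measureReal_mono hsub).trans stdGaussian_real_cube_le)

theorem rothvoss_partial_coloring_general {H : Submodule ℝ (EuclideanSpace ℝ ι)}
    (hdim : (1 - 1 / 2500) * Fintype.card ι ≤ (Module.finrank ℝ H : ℝ))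
    {K : Set (EuclideanSpace ℝ ι)} (hK : Convex ℝ K) (hKneg : ∀ x ∈ K, -x ∈ K)
    (hK_le : Real.exp (-(Fintype.card ι / 2500)) ≤ (subspaceGaussian H).real K)
    {x₀ : EuclideanSpace ℝ ι} (hx₀ : x₀ ∈ cube ι) :
    ∃ x ∈ cube ι, x - x₀ ∈ K ∧ Fintype.card ι / 30000 ≤ ((tightCoords x).card : ℝ) := by
  obtain ⟨y, hy⟩ : K.Nonempty := nonempty_of_measureReal_ne_zero
    ((Real.exp_pos _).trans_le hK_le).ne'
  have h0 : 0 ∈ K := by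
    simpa using hK.midpoint_mem hy (hKneg y hy)
  rcases le_or_gt 2500 (Fintype.card ι : ℝ) with hlarge | hsmall
  · exact exists_card_div_le_card_tightCoords hlarge hdim hK hKneg h0 hK_le hx₀
  rcases isEmpty_or_nonempty ι with hempty | hnonempty
  · exact ⟨x₀, hx₀, by simpa using h0, by simp⟩
  have hcard : Fintype.card ι < Module.finrank ℝ H + 1 := by
    have : (Fintype.card ι : ℝ) < Module.finrank ℝ H + 1 := by linarith
    exact_mod_cast this
  have htop : H = ⊤ := Submodule.eq_top_of_finrank_eq <|
    H.finrank_le.antisymm (finrank_euclideanSpace.trans_le (Nat.lt_succ_iff.1 hcard))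
  rw [htop, subspaceGaussian_top] at hK_le
  obtain ⟨x, hx, hxK, htight⟩ := exists_tightCoords_nonempty_of_exp_le hK hKneg h0 hK_le hx₀
  have hone : (1 : ℝ) ≤ (tightCoords x).card := by exact_mod_cast htight.card_pos
  exact ⟨x, hx, hxK, by linarith⟩

theorem mul_logb_two_one_div_le {ε : ℝ} (hε0 : 0 < ε) (hε : ε ≤ 1 / 60000) :
    3 / 2 * ε * Real.logb 2 (1 / ε) ≤ 1 / 2500 := by
  have hinv : 60000 ≤ 1 / ε := (le_one_div (by norm_num) hε0).2 hε
  have hexp : Real.exp 1 ≤ 60000 := by linarith [Real.exp_one_lt_d9]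
  have hlog : Real.log 60000 ≤ 16 * Real.log 2 := by
    exact_mod_cast (Real.log_le_log (by norm_num) (by norm_num : (60000 : ℝ) ≤ 2 ^ 16)).trans_eq
      (Real.log_pow 2 16)
  calc 3 / 2 * ε * Real.logb 2 (1 / ε)
      = 3 / 2 * (Real.log (1 / ε) / (1 / ε)) / Real.log 2 := by
        rw [Real.logb]
        field_simp
    _ ≤ 3 / 2 * (Real.log 60000 / 60000) / Real.log 2 := by
        gcongr 3 / 2 * ?_ / _
        exact Real.log_div_self_antitoneOn hexp (hexp.trans hinv) hinv
    _ ≤ 3 / 2 * (16 * Real.log 2 / 60000) / Real.log 2 := by gcongr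
    _ = 1 / 2500 := by
        field_simp
        norm_num

end PartialColoring

/-- **Rothvoss's partial coloring lemma (Lemma 2.2), existential form.** Let
`ε ≤ 1/60000`, `δ = (3/2) ε log₂(1/ε)`, `H ⊆ ℝⁿ` a subspace of dimension at least
`(1-δ)n`, `K ⊆ H` a symmetric convex set whose Gaussian measure on `H` (computed via
an orthonormal basis `b` of `H` and i.i.d. standard Gaussians) is at least `e^{-δn}`,
and `x₀ ∈ (-1,1)ⁿ`. Then there is `x ∈ (x₀ + K) ∩ [-1,1]ⁿ` with at least `εn/2`
coordinates in `{±1}`. -/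
theorem rothvoss_partial_coloring
    (ε δ : ℝ) (hε0 : 0 < ε) (hε : ε ≤ 1 / 60000)
    (hδ : δ = 3 / 2 * ε * Real.logb 2 (1 / ε))
    (n : ℕ) (hn : 0 < n)
    (H : Submodule ℝ (EuclideanSpace ℝ (Fin n)))
    (hdim : (1 - δ) * n ≤ (Module.finrank ℝ H : ℝ))
    (K : Set (EuclideanSpace ℝ (Fin n)))
    (hKH : K ⊆ (H : Set (EuclideanSpace ℝ (Fin n))))
    (hKsymm : K = -K) (hKconv : Convex ℝ K)
    (b : OrthonormalBasis (Fin (Module.finrank ℝ H)) ℝ H)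
    (hγ : Real.exp (-(δ * n)) ≤
      ((Measure.pi fun _ : Fin (Module.finrank ℝ H) => gaussianReal 0 1)
        {h | (∑ j, h j • ((b j : H) : EuclideanSpace ℝ (Fin n))) ∈ K}).toReal)
    (x₀ : EuclideanSpace ℝ (Fin n)) (hx₀ : ∀ i, x₀ i ∈ Set.Ioo (-1 : ℝ) 1) :
    ∃ x : EuclideanSpace ℝ (Fin n),
      x - x₀ ∈ K ∧ (∀ i, x i ∈ Set.Icc (-1 : ℝ) 1) ∧
      ε * n / 2 ≤ ({i : Fin n | x i = 1 ∨ x i = -1}.ncard : ℝ) := by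
  have hδn : δ * n ≤ n / 2500 := by
    linarith [mul_le_mul_of_nonneg_right (hδ.trans_le (mul_logb_two_one_div_le hε0 hε))
      n.cast_nonneg]
  have hεn : ε * n ≤ n / 60000 := by
    linarith [mul_le_mul_of_nonneg_right hε n.cast_nonneg]
  have hγK : Real.exp (-(n / 2500)) ≤ (subspaceGaussian H).real K := by
    rw [subspaceGaussian_eq_map_pi b]
    exact (Real.exp_le_exp.2 (neg_le_neg hδn)).trans <| hγ.trans <|
      ENNReal.toReal_mono (measure_ne_top _ _) <|
        Measure.le_map_apply (Measurable.aemeasurable (by fun_prop)) K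
  obtain ⟨x, hx, hxK, hcard⟩ := rothvoss_partial_coloring_general (H := H)
    (by rw [Fintype.card_fin]; linarith) hKconv (fun y hy ↦ by rwa [hKsymm] at hy)
    (by rwa [Fintype.card_fin]) (x₀ := x₀) fun i ↦ abs_le.2 ⟨(hx₀ i).1.le, (hx₀ i).2.le⟩
  have htight : {i | x i = 1 ∨ x i = -1} = (tightCoords x : Set (Fin n)) := by
    ext i
    simp [mem_tightCoords, abs_eq]
  refine ⟨x, hxK, fun i ↦ abs_le.1 (hx i), ?_⟩
  rw [Fintype.card_fin] at hcard
  rw [htight, Set.ncard_coe_finset]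
  linarith [n.cast_nonneg (α := ℝ)]
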